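/- Let p ∈ Ω be a T-periodic point whose minimal period n_p is greater than 1. Then the spectrum σ(H̃_p) of the operator H̃_p has at least one open gap contained in [−1,1]: there exist real numbers α, β with −1 ≤ α < β ≤ 1 such that α ∈ σ(H̃_p), β ∈ σ(H̃_p), and the open interval (α, β) is disjoint from σ(H̃_p). -/

import Mathlib

open Real MeasureTheory Filter Topology Matrix Set

noncomputable section

/-- The left shift on bi-infinite sequences: `(Tω)_n = ω_{n+1}`. -/
def shift (ω : ℤ → ℕ) : ℤ → ℕ := fun n => ω (n + 1)

/-- The subshift of finite type: sequences with letters in `{1,…,ℓ}` and all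
transitions `(ω_n, ω_{n+1})` in the allowed set `W`. -/
def SFT (ℓ : ℕ) (W : Set (ℕ × ℕ)) : Set (ℤ → ℕ) :=
  {ω | (∀ n, 1 ≤ ω n ∧ ω n ≤ ℓ) ∧ ∀ n, (ω n, ω (n + 1)) ∈ W}

/-- The cocycle matrix
`A^{(k)}(ω) = √(ω₀/ω₋₁)·[[((ω₀+ω₋₁)/ω₀)·cos k, −ω₋₁/ω₀],[1, 0]]`. -/
def Acoc (k : ℝ) (ω : ℤ → ℕ) : Matrix (Fin 2) (Fin 2) ℝ :=
  Real.sqrt ((ω 0 : ℝ) / (ω (-1) : ℝ)) •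
    !![((ω 0 : ℝ) + (ω (-1) : ℝ)) / (ω 0 : ℝ) * Real.cos k, -((ω (-1) : ℝ) / (ω 0 : ℝ));
       (1 : ℝ), 0]

/-- The iterated cocycle `A_n(ω) = A^{(k)}(T^{n−1}ω)⋯A^{(k)}(ω)` for `n ≥ 0`,
with `A_0(ω) = Id`. -/
def AIter (k : ℝ) (ω : ℤ → ℕ) : ℕ → Matrix (Fin 2) (Fin 2) ℝ
  | 0 => 1
  | n + 1 => Acoc k (shift^[n] ω) * AIter k ω n

end

/-- `ℓ²(ℤ)` over `ℝ`. -/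
abbrev L2Z : Type := lp (fun _ : ℤ => ℝ) 2

/-- `H` is the periodic Jacobi-type operator `H̃_p` on `ℓ²(ℤ)`:
`(H̃_p u)(n) = (p_n/(p_n+p_{n−1}))·u(n+1) + (p_{n−1}/(p_n+p_{n−1}))·u(n−1)`. -/
def IsJacobiOp (p : ℤ → ℕ) (H : L2Z →L[ℝ] L2Z) : Prop :=
  ∀ u : L2Z, ∀ n : ℤ,
    (H u : ∀ _ : ℤ, ℝ) n =
      ((p n : ℝ) / ((p n : ℝ) + (p (n - 1) : ℝ))) * (u : ∀ _ : ℤ, ℝ) (n + 1) +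
      ((p (n - 1) : ℝ) / ((p n : ℝ) + (p (n - 1) : ℝ))) * (u : ∀ _ : ℤ, ℝ) (n - 1)

open Polynomial

section TransferMatrices

variable {R : Type*} [CommRing R]

/-- The one-step transfer matrix of the recurrence `f (n + 1) = α n f n - β n f (n - 1)`. -/
def transferMatrix (α β : ℤ → R) (n : ℤ) : Matrix (Fin 2) (Fin 2) R :=
  !![α n, -β n; 1, 0]

/-- The product of the `j` transfer matrices starting at site `m`. -/
def transferProd (α β : ℤ → R) (m : ℤ) : ℕ → Matrix (Fin 2) (Fin 2) R
  | 0 => 1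
  | j + 1 => transferMatrix α β (m + j) * transferProd α β m j

lemma transferProd_succ' (α β : ℤ → R) (m : ℤ) (j : ℕ) :
    transferProd α β m (j + 1) = transferProd α β (m + 1) j * transferMatrix α β m := by
  induction j with
  | zero => simp [transferProd]
  | succ j ih =>
    rw [transferProd, ih, transferProd, Matrix.mul_assoc]
    congr 2
    push_cast
    ring

lemma det_transferProd (α β : ℤ → R) (m : ℤ) (j : ℕ) :
    (transferProd α β m j).det = ∏ i ∈ Finset.range j, β (m + i) := by
  induction j with
  | zero => simp [transferProd]
  | succ j ih =>
    rw [transferProd, Matrix.det_mul, ih, Finset.prod_range_succ, mul_comm]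
    simp [transferMatrix, Matrix.det_fin_two]

lemma transferProd_add_period {α β : ℤ → R} {N : ℕ} (hα : ∀ n, α (n + N) = α n)
    (hβ : ∀ n, β (n + N) = β n) (m : ℤ) (j : ℕ) :
    transferProd α β (m + N) j = transferProd α β m j := by
  induction j with
  | zero => rfl
  | succ j ih =>
    have h : transferMatrix α β (m + N + j) = transferMatrix α β (m + j) := by
      rw [add_right_comm, transferMatrix, hα, hβ, transferMatrix]
    rw [transferProd, ih, h, transferProd]

lemma trace_transferProd_period {α β : ℤ → R} {N : ℕ} (hα : ∀ n, α (n + N) = α n)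
    (hβ : ∀ n, β (n + N) = β n) (m : ℤ) :
    (transferProd α β m N).trace = (transferProd α β 0 N).trace := by
  have step (m : ℤ) :
      (transferProd α β (m + 1) N).trace = (transferProd α β m N).trace := by
    cases N with
    | zero => rfl
    | succ k =>
      have h : transferMatrix α β (m + 1 + k) = transferMatrix α β m := by
        have e : m + 1 + (k : ℤ) = m + ((k + 1 : ℕ) : ℤ) := by push_cast; ring
        rw [e, transferMatrix, hα, hβ, transferMatrix]
      rw [transferProd, transferProd_succ' α β m, h, Matrix.trace_mul_comm]
  induction m using Int.induction_on with
  | zero => rfl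
  | succ i ih => rw [step, ih]
  | pred i ih => rw [← ih, ← step (-(i : ℤ) - 1), sub_add_cancel]

lemma recurrence_eq_transferProd {G : Type*} [AddCommGroup G] {α β : ℤ → R} {F : ℤ → R →+ G}
    (hF : ∀ n q, F (n + 1) q = F n (α n * q) - F (n - 1) (β n * q)) (m : ℤ) (j : ℕ) (q : R) :
    F (m + j) q = F m (transferProd α β m j 0 0 * q) + F (m - 1) (transferProd α β m j 0 1 * q) ∧
    F (m + j - 1) q =
      F m (transferProd α β m j 1 0 * q) + F (m - 1) (transferProd α β m j 1 1 * q) := by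
  induction j generalizing q with
  | zero => simp [transferProd]
  | succ j ih =>
    refine ⟨?_, ?_⟩
    · have e : m + ((j + 1 : ℕ) : ℤ) = m + j + 1 := by push_cast; ring
      rw [e, hF, (ih _).1, (ih _).2]
      simp only [transferProd, transferMatrix, Matrix.mul_apply, Fin.sum_univ_two, add_mul,
        map_add, Matrix.of_apply, Matrix.cons_val', Matrix.cons_val_zero, Matrix.cons_val_one,
        Matrix.cons_val_fin_one, neg_mul, map_neg]
      simp only [mul_assoc, mul_left_comm (α _), mul_left_comm (β _)]
      abel
    · have e : m + ((j + 1 : ℕ) : ℤ) - 1 = m + j := by push_cast; ring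
      rw [e, (ih _).1]
      simp [transferProd, transferMatrix, Matrix.mul_apply, Fin.sum_univ_two]

/-- Cayley–Hamilton for the monodromy matrix of a periodic three-term recurrence. -/
lemma recurrence_add_period {G : Type*} [AddCommGroup G] {α β : ℤ → R} {F : ℤ → R →+ G} {N : ℕ}
    (hα : ∀ n, α (n + N) = α n) (hβ : ∀ n, β (n + N) = β n)
    (hdet : ∀ m : ℤ, ∏ i ∈ Finset.range N, β (m + i) = 1)
    (hF : ∀ n q, F (n + 1) q = F n (α n * q) - F (n - 1) (β n * q)) (n : ℤ) (q : R) :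
    F n ((transferProd α β 0 N).trace * q) = F (n + N) q + F (n - N) q := by
  obtain ⟨m, rfl⟩ : ∃ m : ℤ, n = m + N := ⟨n - N, by ring⟩
  have h1 (q : R) := recurrence_eq_transferProd hF m N q
  have h2 := (recurrence_eq_transferProd hF (m + N) N q).1
  have hd := det_transferProd α β m N
  rw [hdet, Matrix.det_fin_two] at hd
  rw [transferProd_add_period hα hβ] at h2
  rw [h2, ← trace_transferProd_period hα hβ m, Matrix.trace_fin_two, (h1 _).1, (h1 _).1, (h1 _).2,
    add_sub_cancel_right]
  set M := transferProd α β m N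
  have e : M 0 0 * ((M 0 0 + M 1 1) * q) = M 0 0 * (M 0 0 * q) + M 1 0 * (M 0 1 * q) + q := by
    linear_combination q * hd
  have e' : M 0 1 * ((M 0 0 + M 1 1) * q) = M 0 1 * (M 0 0 * q) + M 1 1 * (M 0 1 * q) := by ring
  rw [e, e', map_add, map_add, map_add]
  abel

end TransferMatrices

section Discriminant

variable {R : Type*} [CommRing R]

lemma coeff_transferProd (c : ℤ → R) (b : ℤ → R) (m : ℤ) (j : ℕ) :
    let M := transferProd (fun n => C (c n) * X) (fun n => C (b n)) m j
    (∀ k, j < k → (M 0 0).coeff k = 0) ∧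
    (M 0 0).coeff j = ∏ i ∈ Finset.range j, c (m + i) ∧
    (∀ k, j ≤ k → (M 1 0).coeff k = 0) ∧
    (∀ k, j ≤ k → (M 0 1).coeff k = 0) ∧
    (∀ k, j ≤ k → k ≠ 0 → (M 1 1).coeff k = 0) := by
  induction j with
  | zero =>
    simp only [transferProd]
    refine ⟨fun k hk => ?_, ?_, fun k _ => ?_, fun k _ => ?_, fun k _ hk => ?_⟩ <;>
      simp [Polynomial.coeff_one] <;> omega
  | succ j ih =>
    obtain ⟨h1, h2, h3, h4, h5⟩ := ih
    simp only [transferProd, transferMatrix, Matrix.mul_apply, Fin.sum_univ_two,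
        Matrix.of_apply, Matrix.cons_val', Matrix.cons_val_zero, Matrix.cons_val_one,
        Matrix.cons_val_fin_one, neg_mul, one_mul, zero_mul, add_zero]
    refine ⟨fun k hk => ?_, ?_, fun k hk => h1 k (by omega), fun k hk => ?_,
      fun k hk _ => h4 k (by omega)⟩
    · obtain ⟨k, rfl⟩ : ∃ l, k = l + 1 := ⟨k - 1, by omega⟩
      rw [coeff_add, coeff_neg, mul_assoc, coeff_C_mul, coeff_C_mul, coeff_X_mul,
        h1 k (by omega), h3 (k + 1) (by omega)]
      simp
    · rw [coeff_add, coeff_neg, mul_assoc, coeff_C_mul, coeff_C_mul, coeff_X_mul,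
        h2, h3 (j + 1) (by omega), Finset.prod_range_succ]
      ring
    · obtain ⟨k, rfl⟩ : ∃ l, k = l + 1 := ⟨k - 1, by omega⟩
      rw [coeff_add, coeff_neg, mul_assoc, coeff_C_mul, coeff_C_mul, coeff_X_mul,
        h4 k (by omega), h5 (k + 1) (by omega) (by omega)]
      simp

lemma coeff_trace_transferProd (c b : ℤ → R) (m : ℤ) {N : ℕ} (hN : N ≠ 0) :
    (transferProd (fun n => C (c n) * X) (fun n => C (b n)) m N).trace.coeff N =
      ∏ i ∈ Finset.range N, c (m + i) := by
  obtain ⟨-, h2, -, -, h5⟩ := coeff_transferProd c b m N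
  rw [Matrix.trace_fin_two, coeff_add, h2, h5 N le_rfl hN, add_zero]

lemma degree_trace_transferProd_le (c b : ℤ → R) (m : ℤ) (N : ℕ) :
    (transferProd (fun n => C (c n) * X) (fun n => C (b n)) m N).trace.degree ≤ N := by
  obtain ⟨h1, -, -, -, h5⟩ := coeff_transferProd c b m N
  refine (degree_le_iff_coeff_zero _ _).2 fun k hk => ?_
  have hk : N < k := by exact_mod_cast hk
  rw [Matrix.trace_fin_two, coeff_add, h1 k hk, h5 k hk.le (by omega), add_zero]

end Discriminant

lemma exists_two_lt_abs_eval {D : ℝ[X]} {N : ℕ} (hN : N ≠ 0) (hdeg : D.degree ≤ N)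
    (hcoeff : 2 ^ N < D.coeff N) : ∃ x ∈ Icc (-1 : ℝ) 1, 2 < |D.eval x| := by
  by_contra! h
  have hb := Polynomial.Chebyshev.coeff_le_of_forall_abs_le_one (n := N) (P := C (1 / 2) * D)
    ((degree_C_mul (by norm_num)).trans_le hdeg) fun x hx => by
      rw [eval_C_mul, abs_mul, abs_of_pos (by norm_num : (0 : ℝ) < 1 / 2)]
      linarith [h x hx]
  rw [coeff_C_mul] at hb
  obtain ⟨k, rfl⟩ := Nat.exists_eq_succ_of_ne_zero hN
  rw [Nat.succ_sub_one] at hb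
  rw [pow_succ] at hcoeff
  linarith

lemma two_pow_lt_prod_one_add {ι : Type*} {s : Finset ι} {b : ι → ℝ} (hb : ∀ i ∈ s, 0 < b i)
    (hprod : ∏ i ∈ s, b i = 1) (hne : ∃ i ∈ s, b i ≠ 1) :
    2 ^ s.card < ∏ i ∈ s, (1 + b i) := by
  have h : ∏ i ∈ s, 4 * b i < ∏ i ∈ s, (1 + b i) ^ 2 := by
    refine Finset.prod_lt_prod (fun i hi => by linarith [hb i hi])
      (fun i _ => by nlinarith [sq_nonneg (b i - 1)]) ?_
    obtain ⟨i, hi, h1⟩ := hne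
    exact ⟨i, hi, by nlinarith [sq_pos_of_ne_zero (sub_ne_zero.2 h1)]⟩
  rw [Finset.prod_mul_distrib, hprod, Finset.prod_const, mul_one, Finset.prod_pow] at h
  refine lt_of_pow_lt_pow_left₀ 2 (Finset.prod_nonneg fun i hi => by linarith [hb i hi]) ?_
  rwa [← pow_mul, mul_comm, pow_mul, show (2 : ℝ) ^ 2 = 4 by norm_num]

lemma exists_translate (u : L2Z) (k : ℤ) : ∃ v : L2Z, (∀ n, v n = u (n + k)) ∧ ‖v‖ = ‖u‖ := by
  have hp : 0 < (2 : ENNReal).toReal := by simp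
  have hu := (memℓp_gen_iff hp).1 (lp.memℓp u)
  let v : L2Z := ⟨fun n => u (n + k), (memℓp_gen_iff hp).2 ((Equiv.addRight k).summable_iff.2 hu)⟩
  refine ⟨v, fun n => rfl, ?_⟩
  rw [lp.norm_eq_tsum_rpow hp, lp.norm_eq_tsum_rpow hp]
  congr 1
  exact (Equiv.addRight k).tsum_eq fun n => ‖u n‖ ^ (2 : ENNReal).toReal

lemma tendsto_coord_cofinite (u : L2Z) : Tendsto (fun n => u n) cofinite (𝓝 0) := by
  have hp : 0 < (2 : ENNReal).toReal := by simp
  have h := ((memℓp_gen_iff hp).1 (lp.memℓp u)).tendsto_cofinite_zero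
  simp only [ENNReal.toReal_ofNat, Real.rpow_ofNat, Real.norm_eq_abs, sq_abs] at h
  have h' := (Real.continuous_sqrt.tendsto 0).comp h
  simp only [Real.sqrt_zero] at h'
  refine (tendsto_zero_iff_abs_tendsto_zero _).2 (h'.congr fun n => ?_)
  simp [Real.sqrt_sq_eq_abs]

lemma norm_le_two_of_apply_eq_translates {A : L2Z →L[ℝ] L2Z} {k : ℤ}
    (hA : ∀ u n, A u n = u (n + k) + u (n - k)) : ‖A‖ ≤ 2 := by
  refine A.opNorm_le_bound zero_le_two fun u => ?_
  obtain ⟨v, hv, hvn⟩ := exists_translate u k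
  obtain ⟨w, hw, hwn⟩ := exists_translate u (-k)
  have h : A u = v + w := by
    ext n
    rw [hA, lp.coeFn_add, Pi.add_apply, hv, hw, sub_eq_add_neg]
  rw [h]
  linarith [norm_add_le v w]

lemma shift_iterate_apply (ω : ℤ → ℕ) (k : ℕ) (n : ℤ) : shift^[k] ω n = ω (n + k) := by
  induction k generalizing n with
  | zero => simp
  | succ k ih =>
    rw [Function.iterate_succ_apply', shift, ih]
    congr 1
    push_cast
    ring

section Jacobi

variable {p : ℤ → ℕ} {H : L2Z →L[ℝ] L2Z}

lemma prod_ratio_period {N : ℕ} (hpos : ∀ n, 0 < p n) (hper : ∀ n, p (n + N) = p n) (m : ℤ) :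
    ∏ i ∈ Finset.range N, ((p (m + i - 1) : ℝ) / p (m + i)) = 1 := by
  have hne (n : ℤ) : (p n : ℝ) ≠ 0 := by exact_mod_cast (hpos n).ne'
  have h (k : ℕ) : ∏ i ∈ Finset.range k, ((p (m + i - 1) : ℝ) / p (m + i)) =
      p (m - 1) / p (m - 1 + k) := by
    induction k with
    | zero => simp [hne]
    | succ k ih =>
      rw [Finset.prod_range_succ, ih]
      have e : m - 1 + ((k + 1 : ℕ) : ℤ) = m + k := by push_cast; ring
      have e' : m + (k : ℤ) - 1 = m - 1 + k := by ring
      rw [e, e', div_mul_div_cancel₀ (hne _)]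
  rw [h, hper, div_self (hne _)]

/-- Both `1` and `-1` belong to the spectrum: `s - H` misses the unit vector at the origin. -/
lemma IsJacobiOp.mem_spectrum_of_sq_eq_one (hpos : ∀ n, 0 < p n) {ℓ : ℕ} (hle : ∀ n, p n ≤ ℓ)
    (hH : IsJacobiOp p H) {s : ℝ} (hs : s ^ 2 = 1) : s ∈ spectrum ℝ H := by
  have hposR (n : ℤ) : (0 : ℝ) < p n := by exact_mod_cast hpos n
  rw [spectrum.mem_iff]
  rintro ⟨U, hU⟩
  let u : L2Z := (↑U⁻¹ : L2Z →L[ℝ] L2Z) (lp.single 2 0 1)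
  have hu : s • u - H u = lp.single 2 0 1 := by
    have h : (↑U : L2Z →L[ℝ] L2Z) u = lp.single 2 0 1 := by
      change ((↑U : L2Z →L[ℝ] L2Z) * ↑U⁻¹) _ = _
      rw [U.mul_inv]
      rfl
    rw [hU] at h
    simpa [Algebra.algebraMap_eq_smul_one] using h
  -- the (twisted) current of `u` through the edge from `n` to `n + 1`
  let d : ℤ → ℝ := fun n => p n * (u (n + 1) - s * u n)
  have hd (n : ℤ) : s * d (n - 1) - d n = (p n + p (n - 1)) * Pi.single (M := fun _ => ℝ) 0 1 n := by
    have h := congrArg (fun v : L2Z => v n) hu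
    simp only [lp.coeFn_sub, lp.coeFn_smul, Pi.sub_apply, Pi.smul_apply, smul_eq_mul,
      lp.single_apply, hH u n] at h
    rw [← h]
    have h0 : (p n : ℝ) + p (n - 1) ≠ 0 := (add_pos (hposR _) (hposR _)).ne'
    simp only [d, sub_add_cancel]
    field_simp
    linear_combination (-(p (n - 1) : ℝ) * u (n - 1)) * hs
  have habs : |s| = 1 := by
    rw [← sq_eq_sq₀ (abs_nonneg s) zero_le_one, sq_abs, hs, one_pow]
  have hstep {n : ℤ} (hn : n ≠ 0) : |d n| = |d (n - 1)| := by
    have h := hd n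
    rw [Pi.single_eq_of_ne hn, mul_zero, sub_eq_zero] at h
    rw [← h, abs_mul, habs, one_mul]
  have hlim : Tendsto d cofinite (𝓝 0) := by
    have h0 := tendsto_coord_cofinite u
    have h1 := h0.comp (add_left_injective (1 : ℤ)).tendsto_cofinite
    have h2 := ((h1.sub (h0.const_mul s)).abs.const_mul (ℓ : ℝ))
    simp only [mul_zero, sub_zero, abs_zero] at h2
    refine squeeze_zero_norm (fun n => ?_) h2
    rw [Real.norm_eq_abs, abs_mul, Nat.abs_cast]
    exact mul_le_mul_of_nonneg_right (by exact_mod_cast hle n) (abs_nonneg _)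
  have hr (k : ℕ) : |d k| = |d 0| := by
    induction k with
    | zero => rfl
    | succ k ih =>
      rw [hstep (by omega), ← ih]
      congr 2
      push_cast
      ring
  have hl (k : ℕ) : |d (-1 - k)| = |d (-1)| := by
    induction k with
    | zero => simp
    | succ k ih =>
      rw [← ih, hstep (n := -1 - (k : ℤ)) (by omega)]
      congr 2
      push_cast
      ring
  have hzero {a : ℝ} {g : ℕ → ℤ} (hg : Function.Injective g) (h : ∀ k, |d (g k)| = a) :
      a = 0 := by
    have ht := (hlim.comp hg.tendsto_cofinite).abs
    rw [abs_zero] at ht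
    exact tendsto_nhds_unique (tendsto_const_nhds.congr fun k => (h k).symm) ht
  have h0 := abs_eq_zero.1 (hzero (fun a b h => by simpa using h) hr)
  have h1 := abs_eq_zero.1 (hzero (fun a b h => by simpa using h) hl)
  have h := hd 0
  rw [zero_sub, h0, h1, Pi.single_eq_same] at h
  linarith [hposR 0, hposR (-1)]

lemma IsJacobiOp.apply_add_one (hpos : ∀ n, 0 < p n) (hH : IsJacobiOp p H) (u : L2Z) (n : ℤ) :
    u (n + 1) = (1 + (p (n - 1) : ℝ) / p n) * H u n - (p (n - 1) : ℝ) / p n * u (n - 1) := by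
  have hposR (n : ℤ) : (0 : ℝ) < p n := by exact_mod_cast hpos n
  have h0 : (p n : ℝ) + p (n - 1) ≠ 0 := (add_pos (hposR _) (hposR _)).ne'
  have h1 := (hposR n).ne'
  rw [hH u n]
  field_simp
  ring

/-- The discriminant of the periodic Jacobi operator `H̃_p`, as a polynomial in the energy. -/
noncomputable def discriminant (p : ℤ → ℕ) (N : ℕ) : ℝ[X] :=
  (transferProd (fun n => C (1 + (p (n - 1) : ℝ) / p n) * X)
    (fun n => C ((p (n - 1) : ℝ) / p n)) 0 N).trace

/-- The discriminant evaluated at the operator is the sum of the two translations by a period. -/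
lemma IsJacobiOp.aeval_discriminant_apply (hpos : ∀ n, 0 < p n) {N : ℕ}
    (hper : ∀ n, p (n + N) = p n) (hH : IsJacobiOp p H) (u : L2Z) (n : ℤ) :
    aeval H (discriminant p N) u n = u (n + N) + u (n - N) := by
  let F : ℤ → ℝ[X] →+ ℝ := fun n =>
    { toFun := fun q => aeval H q u n
      map_zero' := by simp
      map_add' := by simp }
  have hper' (n : ℤ) : p (n + N - 1) = p (n - 1) := by rw [add_sub_right_comm, hper]
  have hF := recurrence_add_period (F := F) (N := N)
    (α := fun n => C (1 + (p (n - 1) : ℝ) / p n) * X) (β := fun n => C ((p (n - 1) : ℝ) / p n))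
    (fun n => by simp only [hper, hper']) (fun n => by simp only [hper, hper'])
    (fun m => by rw [← map_prod, prod_ratio_period hpos hper, map_one])
    (fun m q => by
      change aeval H q u (m + 1) = aeval H (C _ * X * q) u m - aeval H (C _ * q) u (m - 1)
      rw [mul_assoc, map_mul, aeval_C, map_mul, aeval_X, ← Algebra.smul_def, map_mul, aeval_C,
        ← Algebra.smul_def]
      exact hH.apply_add_one hpos (aeval H q u) m) n 1
  simpa [F, discriminant] using hF

lemma two_pow_lt_coeff_discriminant (hpos : ∀ n, 0 < p n) {N : ℕ} (hN : N ≠ 0)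
    (hper : ∀ n, p (n + N) = p n) (hnotfix : shift p ≠ p) :
    2 ^ N < (discriminant p N).coeff N := by
  have hposR (n : ℤ) : (0 : ℝ) < p n := by exact_mod_cast hpos n
  rw [discriminant, coeff_trace_transferProd _ _ _ hN]
  have hprod := prod_ratio_period hpos hper 0
  have h := two_pow_lt_prod_one_add (s := Finset.range N)
    (b := fun i => (p (0 + i - 1) : ℝ) / p (0 + i)) (fun i _ => div_pos (hposR _) (hposR _)) hprod ?_
  · rwa [Finset.card_range] at h
  by_contra! hconst
  apply hnotfix
  funext n
  have hper' : Function.Periodic p (N : ℤ) := hper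
  have hmod (m : ℤ) (k : ℤ) : p (m + k * N) = p m := by
    simpa using hper'.int_mul k m
  have hN' : (N : ℤ) ≠ 0 := by exact_mod_cast hN
  have hr0 := Int.emod_nonneg (n + 1) hN'
  have hrN := Int.emod_lt_of_pos (n + 1) (b := N) (by omega)
  obtain ⟨r, hr⟩ := Int.eq_ofNat_of_zero_le hr0
  have hdecomp := Int.emod_add_mul_ediv (n + 1) N
  have h1 := hconst r (Finset.mem_range.2 (by omega))
  rw [div_eq_one_iff_eq (hposR _).ne'] at h1
  have h2 : p (0 + (r : ℤ) - 1) = p (0 + (r : ℤ)) := by exact_mod_cast h1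
  rw [← hmod _ ((n + 1) / N), ← hmod (0 + (r : ℤ)) ((n + 1) / N)] at h2
  have e : n + 1 = 0 + (r : ℤ) + (n + 1) / N * N := by linarith
  have e' : n = 0 + (r : ℤ) - 1 + (n + 1) / N * N := by linarith
  exact (congrArg p e).trans (h2.symm.trans (congrArg p e').symm)

end Jacobi

lemma exists_gap_of_isClosed {S : Set ℝ} (hS : IsClosed S) {a b x : ℝ} (ha : a ∈ S) (hb : b ∈ S)
    (hx : x ∈ Icc a b) (hxS : x ∉ S) :
    ∃ α β : ℝ, a ≤ α ∧ α < β ∧ β ≤ b ∧ α ∈ S ∧ β ∈ S ∧ ∀ y ∈ Ioo α β, y ∉ S := by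
  obtain ⟨α, ⟨hαS, hα⟩, hαmax⟩ := (isCompact_Icc.inter_left hS).exists_isGreatest
    (⟨a, ha, left_mem_Icc.2 hx.1⟩ : (S ∩ Icc a x).Nonempty)
  obtain ⟨β, ⟨hβS, hβ⟩, hβmin⟩ := (isCompact_Icc.inter_left hS).exists_isLeast
    (⟨b, hb, right_mem_Icc.2 hx.2⟩ : (S ∩ Icc x b).Nonempty)
  have hαx : α < x := hα.2.lt_of_ne (fun h => hxS (h ▸ hαS))
  have hxβ : x < β := hβ.1.lt_of_ne (fun h => hxS (h ▸ hβS))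
  refine ⟨α, β, hα.1, hαx.trans hxβ, hβ.2, hαS, hβS, fun y hy hyS => ?_⟩
  rcases le_total y x with h | h
  · exact hy.1.not_ge (hαmax ⟨hyS, hα.1.trans hy.1.le, h⟩)
  · exact hy.2.not_ge (hβmin ⟨hyS, h, hy.2.le.trans hβ.2⟩)

/-- Let `p ∈ Ω` be a periodic point whose minimal period is greater than `1`
(i.e., `p` is periodic but not a fixed point of the shift).  Then the spectrum of
`H̃_p` has at least one open gap contained in `[−1,1]`: there are `−1 ≤ α < β ≤ 1`
with `α, β ∈ σ(H̃_p)` and `(α,β) ∩ σ(H̃_p) = ∅`. -/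
theorem statement11 (ℓ : ℕ) (hℓ : 1 < ℓ) (W : Set (ℕ × ℕ))
    (p : ℤ → ℕ) (hp : p ∈ SFT ℓ W)
    (hper : ∃ n : ℕ, 1 ≤ n ∧ shift^[n] p = p)
    (hnotfix : shift p ≠ p)
    (H : L2Z →L[ℝ] L2Z) (hH : IsJacobiOp p H) :
    ∃ α β : ℝ, -1 ≤ α ∧ α < β ∧ β ≤ 1 ∧
      α ∈ spectrum ℝ H ∧ β ∈ spectrum ℝ H ∧
      ∀ x ∈ Ioo α β, x ∉ spectrum ℝ H := by
  obtain ⟨N, hN, hshift⟩ := hper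
  have hpos (n : ℤ) : 0 < p n := (hp.1 n).1
  have hperiod (n : ℤ) : p (n + N) = p n := by
    rw [← shift_iterate_apply p N n, hshift]
  have hN0 : N ≠ 0 := by omega
  obtain ⟨x, hx, hDx⟩ := exists_two_lt_abs_eval hN0 (degree_trace_transferProd_le _ _ _ _)
    (two_pow_lt_coeff_discriminant hpos hN0 hperiod hnotfix)
  refine exists_gap_of_isClosed (spectrum.isClosed H)
    (hH.mem_spectrum_of_sq_eq_one hpos (fun n => (hp.1 n).2) (by norm_num))
    (hH.mem_spectrum_of_sq_eq_one hpos (fun n => (hp.1 n).2) (by norm_num)) hx fun hxS => ?_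
  have hmem := spectrum.subset_polynomial_aeval H (discriminant p N) ⟨x, hxS, rfl⟩
  have hle := (spectrum.norm_le_norm_mul_of_mem hmem).trans
    (mul_le_of_le_one_right (norm_nonneg _) ContinuousLinearMap.norm_id_le)
  have htwo := norm_le_two_of_apply_eq_translates
    (hH.aeval_discriminant_apply hpos hperiod)
  exact absurd (hle.trans htwo) (not_le.2 hDx)
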